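/- Let K be a field of characteristic p > 2, and let m, n be positive integers with mn - m - 2n > 0. Let R = K[A,B,C,D,T]/I as above. Then b^n t^{m-1} lies in the tight closure (a, d)* but not in (a, d); hence the ideal (a, d) of R is not tightly closed and R is not weakly F-regular. -/

import Mathlib

open MvPolynomial

/-! The multiplier in the tight closure condition can be taken to be `1`. Put `α = a²` and
`τ = a² + t^m`. Up to a power of `t`, the element `(b^n t^(m-1))^q` is `b^(nq) (τ - α)^N` with
`N = ⌊(m-1)q/m⌋`, so it suffices to treat `α^i b^(nq) τ^(N-i)`. The relation
`b^(n+1) = (b + α) d` trades powers of `b` for powers of `d` and `α`. This goes on until either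
`α^⌈q/2⌉` divides the monomial or at most `n` factors `b` remain, and then `ατ = bc` together with
`b^n τ = (τ + c) d` produce the missing powers of `d`. This requires `N` to be at least about
`(n+1)q/(2n)`, and `m + 2n < mn` is the inequality `(n+1)/(2n) < (m-1)/m`.

For non-membership, modulo `(a, b^(n+1), c, d, t^m)` the ring `R` becomes
`K[b, t]/(b^(n+1), t^m)`, where `b^n t^(m-1)` generates the socle. -/

section MinorRelations

variable {S : Type*} [CommRing S]

lemma mul_sub_pow_mem {J : Ideal S} {x y z : S} {N : ℕ}
    (h : ∀ i g, i + g = N → x ^ i * y ^ g * z ∈ J) : (y - x) ^ N * z ∈ J := by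
  rw [sub_pow, Finset.sum_mul]
  refine J.sum_mem fun g hg => J.mem_of_dvd ?_
    (h (N - g) g (Nat.sub_add_cancel (Finset.mem_range_succ_iff.1 hg)))
  exact ⟨(-1) ^ (g + N) * (N.choose g : S), by ring⟩

lemma mul_mem_span_pair_mul {w x y z : S} (hx : x ∈ Ideal.span {y, z}) :
    w * x ∈ Ideal.span {y, w * z} := by
  obtain ⟨p, q, rfl⟩ := Ideal.mem_span_pair.1 hx
  exact Ideal.mem_span_pair.2 ⟨w * p, q, by ring⟩

variable {α b c d τ : S} {n : ℕ}

lemma pow_mul_pow_mul_pow_add_eq (h₁ : α * τ = b * c) (h₂ : τ * (b ^ n - d) = c * d)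
    {u y r : ℕ} (hy : y + u = n * r) :
    α ^ u * b ^ y * τ ^ (u + r) = c ^ u * (τ + c) ^ r * d ^ r := by
  have hbτ : b ^ n * τ = (τ + c) * d := by linear_combination h₂
  calc α ^ u * b ^ y * τ ^ (u + r)
      = (α * τ) ^ u * b ^ y * τ ^ r := by ring
    _ = c ^ u * b ^ (y + u) * τ ^ r := by rw [h₁]; ring
    _ = c ^ u * (b ^ n * τ) ^ r := by rw [hy]; ring
    _ = c ^ u * (τ + c) ^ r * d ^ r := by rw [hbτ, mul_pow, mul_assoc]

lemma pow_mul_pow_mul_pow_mem_span_pair (h₁ : α * τ = b * c)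
    (h₂ : τ * (b ^ n - d) = c * d) (h₃ : b * (b ^ n - d) = α * d)
    {h i g : ℕ} (hg : (n + 1) * h ≤ n * (i + g + 1)) {r u y : ℕ} (hy : y + u = n * r) :
    α ^ (i + u) * τ ^ g * b ^ y ∈ Ideal.span {α ^ h, d ^ r} := by
  induction r generalizing u y with
  | zero => exact Ideal.mem_of_dvd _ (by simp : d ^ 0 ∣ _) (Ideal.subset_span (by simp))
  | succ r ih =>
    rw [Nat.mul_succ] at hy
    rcases le_or_gt h (i + u) with hu | hu
    · exact Ideal.mem_of_dvd _ (((pow_dvd_pow α hu).mul_right _).mul_right _)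
        (Ideal.subset_span (by simp))
    rcases le_or_gt y n with hyn | hyn
    · have hτ : u + (r + 1) ≤ g := by
        suffices n * (u + (r + 1)) < n * (g + 1) from
          Nat.lt_succ_iff.1 (Nat.lt_of_mul_lt_mul_left this)
        have := Nat.mul_le_mul_left (n + 1) hu
        linarith
      have hd : d ^ (r + 1) ∣ α ^ u * b ^ y * τ ^ (u + (r + 1)) :=
        ⟨_, (pow_mul_pow_mul_pow_add_eq h₁ h₂ hy).trans (mul_comm _ _)⟩
      refine Ideal.mem_of_dvd _ (hd.trans ?_) (Ideal.subset_span (by simp))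
      rw [mul_right_comm]
      gcongr
      exact Nat.le_add_left _ _
    · obtain ⟨z, rfl⟩ := Nat.exists_eq_add_of_lt hyn
      have hb := ih (u := u) (y := z + 1) (by omega)
      have hα := ih (u := u + 1) (y := z) (by omega)
      have hsum := mul_mem_span_pair_mul (w := d) (Ideal.add_mem _ hb hα)
      rw [← pow_succ'] at hsum
      convert hsum using 1
      linear_combination α ^ (i + u) * τ ^ g * b ^ z * h₃

lemma succ_mul_ceil_half_le {m q : ℕ} (hmn : m + 2 * n < m * n) (hq : 2 * m < q) :
    (n + 1) * ((q + 1) / 2) ≤ n * ((m - 1) * q / m + 1) := by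
  obtain ⟨m, rfl⟩ : ∃ k, m = k + 1 := Nat.exists_eq_succ_of_ne_zero (by rintro rfl; omega)
  have hhalf : 2 * ((q + 1) / 2) ≤ q + 1 := Nat.mul_div_le _ _
  have hdiv : m * q + 1 ≤ (m + 1) * (m * q / (m + 1) + 1) := Nat.lt_mul_div_succ _ m.succ_pos
  have hlin : (m + 1) * (n + 1) * (q + 1) ≤ 2 * n * (m * q + 1) := by
    obtain ⟨k, rfl⟩ : ∃ k, q = k + 1 := ⟨q - 1, by omega⟩
    have := Nat.mul_le_mul_left k hmn
    linarith
  refine Nat.le_of_mul_le_mul_left ?_ (by omega : 0 < 2 * (m + 1))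
  calc 2 * (m + 1) * ((n + 1) * ((q + 1) / 2))
      = (m + 1) * (n + 1) * (2 * ((q + 1) / 2)) := by ring
    _ ≤ (m + 1) * (n + 1) * (q + 1) := by gcongr
    _ ≤ 2 * n * (m * q + 1) := hlin
    _ ≤ 2 * n * ((m + 1) * (m * q / (m + 1) + 1)) := by gcongr
    _ = 2 * (m + 1) * (n * (m * q / (m + 1) + 1)) := by ring

lemma pow_mem_span_pow_pair {a t : S} {m q : ℕ} (hmn : m + 2 * n < m * n) (hq : 2 * m < q)
    (h₁ : a ^ 2 * (a ^ 2 + t ^ m) = b * c) (h₂ : (a ^ 2 + t ^ m) * (b ^ n - d) = c * d)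
    (h₃ : b * (b ^ n - d) = a ^ 2 * d) :
    (b ^ n * t ^ (m - 1)) ^ q ∈ Ideal.span {a ^ q, d ^ q} := by
  let h := (q + 1) / 2
  let N := (m - 1) * q / m
  have hN : t ^ (m * N) * b ^ (n * q) ∈ Ideal.span {(a ^ 2) ^ h, d ^ q} := by
    have hτ : t ^ (m * N) = ((a ^ 2 + t ^ m) - a ^ 2) ^ N := by
      rw [add_sub_cancel_left, pow_mul]
    rw [hτ]
    refine mul_sub_pow_mem fun i g hig => ?_
    have hg : (n + 1) * h ≤ n * (i + g + 1) := hig ▸ succ_mul_ceil_half_le hmn hq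
    exact pow_mul_pow_mul_pow_mem_span_pair h₁ h₂ h₃ hg (u := 0) rfl
  have hle : Ideal.span {(a ^ 2) ^ h, d ^ q} ≤ Ideal.span {a ^ q, d ^ q} := by
    have ha : a ^ q ∣ (a ^ 2) ^ h := by
      rw [← pow_mul]
      exact pow_dvd_pow a (by omega)
    refine Ideal.span_le.2 (Set.pair_subset ?_ (Ideal.subset_span (by simp)))
    exact Ideal.mem_of_dvd _ ha (Ideal.subset_span (by simp))
  refine Ideal.mem_of_dvd _ ?_ (hle hN)
  rw [mul_pow, ← pow_mul, ← pow_mul, mul_comm]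
  exact mul_dvd_mul_left _ (pow_dvd_pow t (Nat.mul_div_le _ _))

end MinorRelations

lemma monomial_notMem_span_X_pow {σ R : Type*} [CommSemiring R] [Nontrivial R] {s : σ →₀ ℕ}
    {e : σ → ℕ} (h : ∀ i, s i < e i) :
    monomial s (1 : R) ∉ Ideal.span (Set.range fun i => X i ^ e i) := by
  have hrange : (Set.range fun i => (X i : MvPolynomial σ R) ^ e i) =
      (fun u => monomial u 1) '' Set.range fun i => Finsupp.single i (e i) := by
    simp only [← Set.range_comp, Function.comp_def, X_pow_eq_monomial]
  rw [hrange, mem_ideal_span_monomial_image]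
  intro hs
  have hmem : s ∈ (monomial s (1 : R)).support := by classical simp [support_monomial]
  obtain ⟨_, ⟨i, rfl⟩, hi⟩ := hs s hmem
  exact (h i).not_ge (Finsupp.single_le_iff.1 hi)

section MinorsIdeal

variable (K : Type*) [CommRing K] (m n : ℕ)

/-- The ideal `I` of `2 × 2` minors of the matrix with rows `(A² + T^m, B, D)` and
`(C, A², B^n - D)`; the variables `A, B, C, D, T` are `X 0, ..., X 4`. -/
noncomputable def minorsIdeal : Ideal (MvPolynomial (Fin 5) K) :=
  Ideal.span
    { (X 0 ^ 2) * (X 0 ^ 2 + X 4 ^ m) - X 1 * X 2,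
      (X 0 ^ 2 + X 4 ^ m) * (X 1 ^ n - X 3) - X 2 * X 3,
      X 1 * (X 1 ^ n - X 3) - (X 0 ^ 2) * X 3 }

lemma mk_pow_mem_span_pow_pair {q : ℕ} (hmn : m + 2 * n < m * n) (hq : 2 * m < q) :
    (Ideal.Quotient.mk (minorsIdeal K m n) (X 1) ^ n *
        Ideal.Quotient.mk (minorsIdeal K m n) (X 4) ^ (m - 1)) ^ q ∈
      Ideal.span {Ideal.Quotient.mk (minorsIdeal K m n) (X 0) ^ q,
        Ideal.Quotient.mk (minorsIdeal K m n) (X 3) ^ q} := by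
  have hmk {f g : MvPolynomial (Fin 5) K} (h : f - g ∈ minorsIdeal K m n) :
      Ideal.Quotient.mk (minorsIdeal K m n) f = Ideal.Quotient.mk (minorsIdeal K m n) g :=
    Ideal.Quotient.eq.2 h
  refine pow_mem_span_pow_pair hmn hq (c := Ideal.Quotient.mk _ (X 2)) ?_ ?_ ?_
  all_goals
    simp only [← map_pow, ← map_add, ← map_sub, ← map_mul]
    exact hmk (Ideal.subset_span (by simp))

lemma minorsIdeal_le_span_X_pow :
    minorsIdeal K m n ≤ Ideal.span (Set.range fun i => X i ^ ![1, n + 1, 1, 1, m] i) := by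
  set J := Ideal.span (Set.range fun i => (X i : MvPolynomial (Fin 5) K) ^ ![1, n + 1, 1, 1, m] i)
  have hJ (i : Fin 5) : X i ^ ![1, n + 1, 1, 1, m] i ∈ J := Ideal.subset_span ⟨i, rfl⟩
  have hA : X 0 ∈ J := by simpa using hJ 0
  have hB : X 1 ^ (n + 1) ∈ J := hJ 1
  have hC : X 2 ∈ J := by simpa using hJ 2
  have hD : X 3 ∈ J := by simpa using hJ 3
  have hT : X 4 ^ m ∈ J := hJ 4
  have hα : X 0 ^ 2 ∈ J := J.pow_mem_of_mem hA 2 two_pos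
  have hτ : X 0 ^ 2 + X 4 ^ m ∈ J := J.add_mem hα hT
  refine Ideal.span_le.2 ?_
  rintro f (rfl | rfl | rfl)
  · exact J.sub_mem (J.mul_mem_left _ hτ) (J.mul_mem_left _ hC)
  · exact J.sub_mem (J.mul_mem_right _ hτ) (J.mul_mem_left _ hD)
  · rw [mul_sub, ← pow_succ']
    exact J.sub_mem (J.sub_mem hB (J.mul_mem_left _ hD)) (J.mul_mem_left _ hD)

lemma X_pow_mul_X_pow_notMem_sup_minorsIdeal [Nontrivial K] (hm : 0 < m) :
    X 1 ^ n * X 4 ^ (m - 1) ∉ Ideal.span {X 0, X 3} ⊔ minorsIdeal K m n := by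
  have hle : Ideal.span {X 0, X 3} ⊔ minorsIdeal K m n ≤
      Ideal.span (Set.range fun i => X i ^ ![1, n + 1, 1, 1, m] i) := by
    refine sup_le (Ideal.span_le.2 (Set.pair_subset ?_ ?_)) (minorsIdeal_le_span_X_pow K m n)
    · exact Ideal.subset_span ⟨0, pow_one _⟩
    · exact Ideal.subset_span ⟨3, pow_one _⟩
  refine fun h => monomial_notMem_span_X_pow
    (s := Finsupp.single 1 n + Finsupp.single 4 (m - 1)) ?_ (hle ?_)
  · intro i
    fin_cases i <;> simp [hm]
  · simpa only [X_pow_eq_monomial, monomial_mul, one_mul] using h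

end MinorsIdeal

theorem stmt17_general (K : Type*) [CommRing K] [Nontrivial K]
    (m n : ℕ) (hmn : m + 2 * n < m * n)
    (I : Ideal (MvPolynomial (Fin 5) K))
    (hI : I = Ideal.span
      { (X 0 ^ 2) * (X 0 ^ 2 + X 4 ^ m) - X 1 * X 2,
        (X 0 ^ 2 + X 4 ^ m) * (X 1 ^ n - X 3) - X 2 * X 3,
        X 1 * (X 1 ^ n - X 3) - (X 0 ^ 2) * X 3 })
    (a b d t : MvPolynomial (Fin 5) K ⧸ I)
    (ha : a = Ideal.Quotient.mk I (X 0)) (hb : b = Ideal.Quotient.mk I (X 1))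
    (hd : d = Ideal.Quotient.mk I (X 3)) (ht : t = Ideal.Quotient.mk I (X 4)) :
    (∀ q : ℕ, 2 * m < q →
      (b ^ n * t ^ (m - 1)) ^ q ∈ Ideal.span {a ^ q, d ^ q}) ∧
    b ^ n * t ^ (m - 1) ∉ Ideal.span {a, d} := by
  subst hI ha hb hd ht
  refine ⟨fun q hq => mk_pow_mem_span_pow_pair K m n hmn hq, fun h => ?_⟩
  have hm : 0 < m := Nat.pos_of_ne_zero (by rintro rfl; omega)
  refine X_pow_mul_X_pow_notMem_sup_minorsIdeal K m n hm (Ideal.mem_quotient_iff_mem_sup.1 ?_)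
  rwa [map_mul, map_pow, map_pow, Ideal.map_span, Set.image_pair]

/-- with char K = p > 2 and mn - m - 2n > 0, in R = K[A,B,C,D,T]/I
(variables 0=A, 1=B, 2=C, 3=D, 4=T), the element bⁿt^{m-1} lies in the tight closure
of (a, d) (there is a multiplier c₀ outside every minimal prime with
c₀·(bⁿt^{m-1})^q ∈ (a^q, d^q) for all q = p^e ≫ 0), but bⁿt^{m-1} ∉ (a, d);
hence (a, d) is not tightly closed and R is not weakly F-regular. -/
theorem stmt17 (K : Type) [Field K] (p : ℕ) [Fact p.Prime] [CharP K p] (hp : 2 < p)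
    (m n : ℕ) (hm : 0 < m) (hn : 0 < n) (hmn : m + 2 * n < m * n)
    (I : Ideal (MvPolynomial (Fin 5) K))
    (hI : I = Ideal.span
      { (X 0 ^ 2) * (X 0 ^ 2 + X 4 ^ m) - X 1 * X 2,
        (X 0 ^ 2 + X 4 ^ m) * (X 1 ^ n - X 3) - X 2 * X 3,
        X 1 * (X 1 ^ n - X 3) - (X 0 ^ 2) * X 3 })
    (a b d t : MvPolynomial (Fin 5) K ⧸ I)
    (ha : a = Ideal.Quotient.mk I (X 0)) (hb : b = Ideal.Quotient.mk I (X 1))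
    (hd : d = Ideal.Quotient.mk I (X 3)) (ht : t = Ideal.Quotient.mk I (X 4)) :
    (∃ c₀ : MvPolynomial (Fin 5) K ⧸ I,
      (∀ P ∈ minimalPrimes (MvPolynomial (Fin 5) K ⧸ I), c₀ ∉ P) ∧
      ∃ q₀ : ℕ, ∀ e : ℕ, q₀ ≤ p ^ e →
        c₀ * (b ^ n * t ^ (m - 1)) ^ (p ^ e) ∈
          Ideal.span {a ^ (p ^ e), d ^ (p ^ e)}) ∧
    b ^ n * t ^ (m - 1) ∉ Ideal.span {a, d} := by
  have h := stmt17_general K m n hmn I hI a b d t ha hb hd ht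
  exact ⟨⟨1, fun P hP => P.ne_top_iff_one.1 hP.1.1.ne_top, 2 * m + 1,
    fun e he => by simpa only [one_mul] using h.1 (p ^ e) he⟩, h.2⟩
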